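/- For integers n ≥ 3 and p ≥ 1, the complement graph of H(p,n) is a (2np−3p)-regular graph on 2pn vertices with chromatic number n, and it has exactly two proper vertex n-colorings (viewed as partitions of the vertex set into n independent sets): one with color classes C_i = V_{2i−1} ∪ V_{2i} for i = 1,…,n, and one with color classes R_1 = V_1 ∪ V_{2n} and R_i = V_{2i−2} ∪ V_{2i−1} for i = 2,…,n. Moreover, for every s ≤ n−1, the subgraph induced by any s color classes of the first coloring is distinct from the subgraph induced by any s color classes of the second; hence transforming one coloring into the other requires changing all n color classes. -/

import Mathlib

/-!
A color class of the complement is a clique of `H(p,n)`. Since the cycle of the `2n` classes has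
length at least `6`, a clique of `H(p,n)` lies in a block `V_a ∪ V_{a+1}` (`subset_block`), so it
has at most `2p` vertices. As `n` color classes must cover `2pn` vertices, each of them is a full
block (`exists_eq_block`). The starting indices `a` of the blocks used satisfy: exactly one of `a`
and `a + 1` is used, because the blocks are disjoint and cover. Hence they are all the even or all
the odd elements of `ZMod (2n)`, which gives exactly the two partitions (`partition_cases`).

The chromatic number is at least `n` because one vertex from each even class gives an `n`-clique of
the complement, and coloring by `⌊a / 2⌋` uses `n` colors.

Finally, a set of classes that is a union of even blocks and also a union of odd blocks is closed
under `a ↦ a + 1`: an even block carries an even `a` to `a + 1`, an odd block an odd one. So a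
nonempty common union is the whole vertex set and uses all `n` color classes (`eq_of_sUnion_eq`).
-/

open SimpleGraph Set

namespace EdgeTrans

universe u v

variable {V : Type*} {W : Type*}

/-- The degree of a vertex. -/
noncomputable def deg (G : SimpleGraph V) (x : V) : ℕ :=
  (G.neighborSet x).ncard

/-- The maximum degree `Δ(G)`. -/
noncomputable def maxDeg (G : SimpleGraph V) : ℕ :=
  ⨆ x, deg G x

/-- A proper `t`-edge-coloring of `G`, using the colors `1, …, t`. -/
def IsProperEdgeColoring (G : SimpleGraph V) (t : ℕ) (f : Sym2 V → ℕ) : Prop :=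
  (∀ e ∈ G.edgeSet, f e ∈ Finset.Icc 1 t) ∧
  ∀ e₁ ∈ G.edgeSet, ∀ e₂ ∈ G.edgeSet, e₁ ≠ e₂ → (∃ x, x ∈ e₁ ∧ x ∈ e₂) → f e₁ ≠ f e₂

/-- The color class `M(f, j)`: the set of edges of `G` colored `j` by `f`. -/
def colorClass (G : SimpleGraph V) (f : Sym2 V → ℕ) (j : ℕ) : Set (Sym2 V) :=
  {e | e ∈ G.edgeSet ∧ f e = j}

/-- `f` and `g` differ by at most `n` color classes. -/
def DifferAtMost (G : SimpleGraph V) (n : ℕ) (f g : Sym2 V → ℕ) : Prop :=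
  {j : ℕ | colorClass G f j ≠ colorClass G g j}.ncard ≤ n

/-- `f` and `g` are `n`-equivalent proper `t`-edge-colorings: one can be transformed into the
other by a sequence of proper `t`-edge-colorings in which consecutive colorings differ by at
most `n` color classes. -/
def NEquiv (G : SimpleGraph V) (t n : ℕ) (f g : Sym2 V → ℕ) : Prop :=
  ∃ (k : ℕ) (F : ℕ → Sym2 V → ℕ), 1 ≤ k ∧ F 0 = f ∧ F k = g ∧
    (∀ i ≤ k, IsProperEdgeColoring G t (F i)) ∧
    ∀ i < k, DifferAtMost G n (F i) (F (i + 1))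

/-- The chromatic index `χ'(G)`. -/
noncomputable def chromIdx (G : SimpleGraph V) : ℕ :=
  sInf {t | ∃ f, IsProperEdgeColoring G t f}

/-- The edge chromatic transformation index `χ'_trans(G)`: the minimum `n ≥ 2` such that any
two proper `χ'(G)`-edge-colorings of `G` are `n`-equivalent. -/
noncomputable def transIdx (G : SimpleGraph V) : ℕ :=
  sInf {n | 2 ≤ n ∧ ∀ f g, IsProperEdgeColoring G (chromIdx G) f →
      IsProperEdgeColoring G (chromIdx G) g → NEquiv G (chromIdx G) n f g}

/-- `v` is a cutvertex of `G`: some two other vertices are connected in `G`, but every walk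
between them passes through `v`. -/
def IsCutVertex (G : SimpleGraph V) (x : V) : Prop :=
  ∃ a b : V, a ≠ x ∧ b ≠ x ∧ G.Reachable a b ∧ ∀ p : G.Walk a b, x ∈ p.support

/-- A block of `G`: a maximal connected subgraph without a cutvertex of the subgraph. -/
def IsBlock (G : SimpleGraph V) (B : G.Subgraph) : Prop :=
  B.coe.Connected ∧ (∀ x, ¬ IsCutVertex B.coe x) ∧
    ∀ B' : G.Subgraph, B ≤ B' → B'.coe.Connected →
      (∀ x, ¬ IsCutVertex B'.coe x) → B' = B

/-- Membership in the class `𝒜(q)`: every subgraph `H` of `G` with `Δ(H) ≤ q` has a proper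
`q`-edge-coloring. -/
def MemA (q : ℕ) (G : SimpleGraph V) : Prop :=
  ∀ H : SimpleGraph V, H ≤ G → maxDeg H ≤ q → ∃ f, IsProperEdgeColoring H q f

/-- `G` is `k`-degenerate: every (nonempty) subgraph of `G` contains a vertex of degree
at most `k` in the subgraph. -/
def Degenerate (k : ℕ) (G : SimpleGraph V) : Prop :=
  ∀ H : G.Subgraph, H.verts.Nonempty → ∃ x ∈ H.verts, (H.neighborSet x).ncard ≤ k

/-- `G` has `H` as a minor (via branch sets). -/
def HasMinor (G : SimpleGraph V) (H : SimpleGraph W) : Prop :=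
  ∃ F : W → Set V,
    (∀ w, (G.induce (F w)).Connected) ∧
    (∀ w₁ w₂, w₁ ≠ w₂ → Disjoint (F w₁) (F w₂)) ∧
    (∀ w₁ w₂, H.Adj w₁ w₂ → ∃ v₁ ∈ F w₁, ∃ v₂ ∈ F w₂, G.Adj v₁ v₂)

/-- Planarity, via Wagner's characterization: no `K₅` minor and no `K₃,₃` minor. -/
def Planar (G : SimpleGraph V) : Prop :=
  ¬ HasMinor G (completeGraph (Fin 5)) ∧
  ¬ HasMinor G (completeBipartiteGraph (Fin 3) (Fin 3))

/-- Series-parallel: no `K₄` minor. -/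
def SeriesParallel (G : SimpleGraph V) : Prop :=
  ¬ HasMinor G (completeGraph (Fin 4))

/-- `G` is chordless: in every cycle, any two nonconsecutive vertices are non-adjacent,
i.e. every edge of `G` joining two vertices of a cycle is an edge of the cycle. -/
def Chordless (G : SimpleGraph V) : Prop :=
  ∀ (x : V) (c : G.Walk x x), c.IsCycle →
    ∀ a ∈ c.support, ∀ b ∈ c.support, G.Adj a b → s(a, b) ∈ c.edges

/-- The wheel graph with hub `none` and cycle `ZMod n`. -/
def wheelGraph (n : ℕ) : SimpleGraph (Option (ZMod n)) :=
  SimpleGraph.fromRel (fun a b =>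
    a = none ∨ ∃ i : ZMod n, a = some i ∧ b = some (i + 1))

/-- `G` is a wheel graph. -/
def IsWheel (G : SimpleGraph V) : Prop :=
  ∃ n : ℕ, 3 ≤ n ∧ Nonempty (G ≃g wheelGraph n)

/-- `G` is a Halin graph: `G` is planar and is the edge-disjoint union of a spanning tree `T`
on at least four vertices having no vertex of degree two, and a cycle through exactly the
leaves of `T`. -/
def IsHalin (G : SimpleGraph V) : Prop :=
  Planar G ∧ 4 ≤ Nat.card V ∧
  ∃ T : SimpleGraph V, T ≤ G ∧ T.IsTree ∧ (∀ x : V, deg T x ≠ 2) ∧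
    ∃ (x₀ : V) (c : G.Walk x₀ x₀), c.IsCycle ∧
      (∀ e : Sym2 V, e ∈ c.edges ↔ e ∈ G.edgeSet \ T.edgeSet) ∧
      (∀ u : V, u ∈ c.support ↔ deg T u = 1)

/-- The subgraph `G(f,g,t)`: the (spanning) subgraph of `G` with edge set
`M(f,t) △ M(g,t)`. -/
def diffGraph (G : SimpleGraph V) (t : ℕ) (f g : Sym2 V → ℕ) : SimpleGraph V :=
  SimpleGraph.fromEdgeSet (symmDiff (colorClass G f t) (colorClass G g t))

/-- The walk `p` (a path or a cycle) is an entire connected component of its ambient graph: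
every edge incident with a vertex of `p` is an edge of `p`. -/
def IsComponentWalk {G : SimpleGraph V} {u x : V} (p : G.Walk u x) : Prop :=
  ∀ a ∈ p.support, ∀ b, G.Adj a b → s(a, b) ∈ p.edges

/-- The color `i` is missing at `x` under `f`. -/
def MissingAt (G : SimpleGraph V) (f : Sym2 V → ℕ) (i : ℕ) (x : V) : Prop :=
  ∀ e ∈ G.edgeSet, x ∈ e → f e ≠ i

/-- The path `p` is alternately colored with colors `a` and `b` under `f`
(an `(a,b)`-colored path). -/
def AltColored (f : Sym2 V → ℕ) (a b : ℕ) {G : SimpleGraph V} {u x : V}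
    (p : G.Walk u x) : Prop :=
  (∀ i : Fin p.edges.length, f (p.edges.get i) = if Even i.1 then a else b) ∨
  (∀ i : Fin p.edges.length, f (p.edges.get i) = if Even i.1 then b else a)

/-- The path `p` is `t`-alternating: of any two consecutive edges, one is colored `t`. -/
def AltPath (f : Sym2 V → ℕ) (t : ℕ) {G : SimpleGraph V} {u x : V}
    (p : G.Walk u x) : Prop :=
  ∀ (i : ℕ) (h : i + 1 < p.edges.length),
    f (p.edges.get ⟨i, Nat.lt_of_succ_lt h⟩) = t ∨ f (p.edges.get ⟨i + 1, h⟩) = t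

/-- The cycle `c` is `t`-alternating: of any two (cyclically) consecutive edges, one is
colored `t`. -/
def IsAltCycle (f : Sym2 V → ℕ) (t : ℕ) {G : SimpleGraph V} {u : V}
    (c : G.Walk u u) : Prop :=
  ∀ i : Fin c.edges.length,
    f (c.edges.get i) = t ∨
    f (c.edges.get ⟨(i.1 + 1) % c.edges.length, Nat.mod_lt _ i.pos⟩) = t

/-- `G` is 2-connected. -/
def TwoConnected (G : SimpleGraph V) : Prop :=
  G.Connected ∧ 3 ≤ Nat.card V ∧ ∀ x, ¬ IsCutVertex G x

/-- The union of the cycle `c` and the ears `P j` for `j < i`, as a subgraph. -/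
noncomputable def earPrefix {G : SimpleGraph V} {v₀ : V} (c : G.Walk v₀ v₀) {n : ℕ}
    {x y : Fin n → V} (P : ∀ i : Fin n, G.Walk (x i) (y i)) (i : ℕ) : G.Subgraph :=
  c.toSubgraph ⊔ ⨆ j : Fin n, ⨆ _ : (j : ℕ) < i, (P j).toSubgraph

/-- `c, P 0, …, P (n-1)` is a `t`-alternating ear decomposition with respect to the cycle `c`:
`c` is a `t`-alternating cycle, and each `P i` is a `(cᵢ, t)`-colored path (`cᵢ ≤ t - 1`) which
is an ear of `c ∪ P 0 ∪ … ∪ P i`, i.e. its endpoints lie in the previous part and its internal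
vertices have degree 2 in `c ∪ P 0 ∪ … ∪ P i`. -/
def IsEarDecomp (G : SimpleGraph V) (f : Sym2 V → ℕ) (t : ℕ) {v₀ : V} (c : G.Walk v₀ v₀)
    (n : ℕ) (x y : Fin n → V) (P : ∀ i : Fin n, G.Walk (x i) (y i)) : Prop :=
  c.IsCycle ∧ IsAltCycle f t c ∧
  ∀ i : Fin n,
    (P i).IsPath ∧ 1 ≤ (P i).length ∧
    (∃ ci : ℕ, ci ≤ t - 1 ∧ AltColored f ci t (P i)) ∧
    x i ∈ (earPrefix c P (i : ℕ)).verts ∧ y i ∈ (earPrefix c P (i : ℕ)).verts ∧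
    ∀ a ∈ (P i).support, a ≠ x i → a ≠ y i →
      ((earPrefix c P ((i : ℕ) + 1)).neighborSet a).ncard = 2

/-- The line graph of `G`. -/
def lineGr (G : SimpleGraph V) : SimpleGraph G.edgeSet :=
  SimpleGraph.fromRel (fun e₁ e₂ => ∃ x, x ∈ (e₁ : Sym2 V) ∧ x ∈ (e₂ : Sym2 V))

/-- The clique number (in `ℕ∞`). -/
noncomputable def cliqueNumE (G : SimpleGraph V) : ℕ∞ :=
  sSup {n : ℕ∞ | ∃ (m : ℕ) (s : Finset V), n = (m : ℕ∞) ∧ G.IsNClique m s}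

/-- `G` is a perfect graph: every induced subgraph has chromatic number equal to its
clique number. -/
def IsPerfect (G : SimpleGraph V) : Prop :=
  ∀ s : Set V, (G.induce s).chromaticNumber = cliqueNumE (G.induce s)

/-- A partition of the vertex set of `G` into `n` cliques, each of size `sz`. -/
def IsCliquePartition (G : SimpleGraph V) (n sz : ℕ) (P : Set (Set V)) : Prop :=
  P.ncard = n ∧ (∀ s ∈ P, G.IsClique s ∧ s.ncard = sz) ∧
  ⋃₀ P = Set.univ ∧ P.Pairwise fun s₁ s₂ => Disjoint s₁ s₂

/-- A proper vertex `n`-coloring of `G`, viewed as a partition of the vertex set into `n`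
independent sets (color classes). -/
def IsIndepPartition (G : SimpleGraph V) (n : ℕ) (P : Set (Set V)) : Prop :=
  P.ncard = n ∧ (∀ s ∈ P, ∀ a ∈ s, ∀ b ∈ s, ¬ G.Adj a b) ∧
  ⋃₀ P = Set.univ ∧ P.Pairwise fun s₁ s₂ => Disjoint s₁ s₂

/-- The graph `H(p,n)`: vertex classes `V_1, …, V_{2n}` of size `p` (indexed here by
`ZMod (2n)`), with two vertices adjacent iff they lie in the same class or in (cyclically)
consecutive classes. -/
def Hgraph (p n : ℕ) : SimpleGraph (ZMod (2 * n) × Fin p) :=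
  SimpleGraph.fromRel (fun a b => a.1 = b.1 ∨ a.1 + 1 = b.1)

/-- The clique partition `{C_1, …, C_n}` of `H(p,n)`, `C_i = V_{2i-1} ∪ V_{2i}`. -/
def Cpart (p n : ℕ) : Set (Set (ZMod (2 * n) × Fin p)) :=
  {s | ∃ i : Fin n, s = {x | x.1 = ((2 * (i : ℕ) : ℕ) : ZMod (2 * n)) ∨
      x.1 = ((2 * (i : ℕ) + 1 : ℕ) : ZMod (2 * n))}}

/-- The clique partition `{R_1, …, R_n}` of `H(p,n)`, `R_1 = V_{2n} ∪ V_1` and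
`R_i = V_{2i-2} ∪ V_{2i-1}`. -/
def Rpart (p n : ℕ) : Set (Set (ZMod (2 * n) × Fin p)) :=
  {s | ∃ i : Fin n, s = {x | x.1 = ((2 * (i : ℕ) : ℕ) : ZMod (2 * n)) - 1 ∨
      x.1 = ((2 * (i : ℕ) : ℕ) : ZMod (2 * n))}}

/-- A multigraph on vertices `α` with edges `β`: each edge has two distinct endpoints. -/
structure Multigraph (α : Type u) (β : Type v) where
  ends : β → Sym2 α
  not_isDiag : ∀ e, ¬ (ends e).IsDiag

namespace Multigraph

variable {α : Type u} {β : Type v}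

/-- A proper `t`-edge-coloring of a multigraph, with colors `1, …, t`. -/
def IsProper (G : Multigraph α β) (t : ℕ) (f : β → ℕ) : Prop :=
  (∀ e, f e ∈ Finset.Icc 1 t) ∧
  ∀ e₁ e₂ : β, e₁ ≠ e₂ → (∃ x, x ∈ G.ends e₁ ∧ x ∈ G.ends e₂) → f e₁ ≠ f e₂

/-- The color class `M(f,j)` of a multigraph edge coloring. -/
def mColorClass (f : β → ℕ) (j : ℕ) : Set β := {e | f e = j}

/-- `f` and `g` differ by at most `n` color classes. -/
def MDifferAtMost (n : ℕ) (f g : β → ℕ) : Prop :=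
  {j : ℕ | mColorClass f j ≠ mColorClass g j}.ncard ≤ n

/-- `n`-equivalence of proper `t`-edge-colorings of a multigraph. -/
def MNEquiv (G : Multigraph α β) (t n : ℕ) (f g : β → ℕ) : Prop :=
  ∃ (k : ℕ) (F : ℕ → β → ℕ), 1 ≤ k ∧ F 0 = f ∧ F k = g ∧
    (∀ i ≤ k, G.IsProper t (F i)) ∧ ∀ i < k, MDifferAtMost n (F i) (F (i + 1))

/-- The chromatic index of a multigraph. -/
noncomputable def mChromIdx (G : Multigraph α β) : ℕ :=
  sInf {t | ∃ f, G.IsProper t f}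

/-- The edge chromatic transformation index of a multigraph. -/
noncomputable def mTransIdx (G : Multigraph α β) : ℕ :=
  sInf {n | 2 ≤ n ∧ ∀ f g, G.IsProper G.mChromIdx f → G.IsProper G.mChromIdx g →
      G.MNEquiv G.mChromIdx n f g}

/-- The degree of a vertex in a multigraph. -/
noncomputable def mDeg (G : Multigraph α β) (x : α) : ℕ := {e | x ∈ G.ends e}.ncard

/-- The underlying simple graph of a multigraph. -/
def toSimple (G : Multigraph α β) : SimpleGraph α :=
  SimpleGraph.fromEdgeSet (Set.range G.ends)

end Multigraph

/-! ### Blocks of two consecutive classes -/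

/-- The union `V_a ∪ V_{a+1}` of two cyclically consecutive classes. -/
def block (p n : ℕ) (a : ZMod (2 * n)) : Set (ZMod (2 * n) × Fin p) :=
  {x | x.1 = a ∨ x.1 = a + 1}

/-- The parity of a class index, well defined because `2 * n` is even. -/
def par (n : ℕ) : ZMod (2 * n) →+* ZMod 2 := ZMod.castHom (dvd_mul_right 2 n) (ZMod 2)

lemma zmod_two_cases (c : ZMod 2) : c = 0 ∨ c = 1 := by
  revert c; decide

lemma natCast_ne_zero_of_lt {n k : ℕ} (hk : 0 < k) (hkn : k < 2 * n) :
    (k : ZMod (2 * n)) ≠ 0 := by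
  intro h
  rw [ZMod.natCast_eq_zero_iff] at h
  exact absurd (Nat.le_of_dvd hk h) (by omega)

lemma compl_adj_iff {p n : ℕ} {x y : ZMod (2 * n) × Fin p} :
    (Hgraph p n)ᶜ.Adj x y ↔ ¬ (x.1 = y.1 ∨ x.1 + 1 = y.1 ∨ y.1 + 1 = x.1) := by
  rw [SimpleGraph.compl_adj, Hgraph, SimpleGraph.fromRel_adj]
  by_cases h : x = y
  · simp [h]
  · simp only [ne_eq, h, not_false_eq_true, true_and]
    grind

/-- Cliques of `H(p,n)` lie in two consecutive classes: the cycle of classes has length at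
least `6`, so it contains no triangle. -/
lemma subset_block {p n : ℕ} (hn : 3 ≤ n) {s : Set (ZMod (2 * n) × Fin p)}
    (hs : ∀ a ∈ s, ∀ b ∈ s, ¬ (Hgraph p n)ᶜ.Adj a b) : ∃ a, s ⊆ block p n a := by
  have h3 : (3 : ZMod (2 * n)) ≠ 0 := by
    exact_mod_cast natCast_ne_zero_of_lt (n := n) (k := 3) (by omega) (by omega)
  simp only [compl_adj_iff, not_not] at hs
  by_cases hem : ∃ x ∈ s, ∃ y ∈ s, y.1 + 1 = x.1
  · obtain ⟨x, hx, y, hy, hxy⟩ := hem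
    refine ⟨y.1, fun z hz => ?_⟩
    have e1 := hs z hz x hx
    have e2 := hs z hz y hy
    change z.1 = y.1 ∨ z.1 = y.1 + 1
    rw [← hxy] at e1
    by_contra hcon
    push Not at hcon
    obtain ⟨c1, c2⟩ := hcon
    have e1' : y.1 + 1 + 1 = z.1 ∨ z.1 + 1 = y.1 + 1 := by tauto
    have e2' : z.1 + 1 = y.1 := by
      rcases e2 with h | h | h
      · exact absurd h c1
      · exact h
      · exact absurd h.symm c2
    rcases e1' with h | h
    · exact h3 (by linear_combination h + e2')
    · exact c1 (add_right_cancel h)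
  · rcases s.eq_empty_or_nonempty with rfl | ⟨x, hx⟩
    · exact ⟨0, Set.empty_subset _⟩
    · refine ⟨x.1, fun z hz => ?_⟩
      rcases hs z hz x hx with h | h | h
      · exact Or.inl h
      · exact absurd ⟨x, hx, z, hz, h⟩ hem
      · exact Or.inr h.symm

lemma block_indep {p n : ℕ} (a : ZMod (2 * n)) :
    ∀ x ∈ block p n a, ∀ y ∈ block p n a, ¬ (Hgraph p n)ᶜ.Adj x y := by
  intro x hx y hy
  rw [compl_adj_iff, not_not]
  rcases hx with hx | hx <;> rcases hy with hy | hy <;> simp [hx, hy]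

lemma ncard_index_mem {p n : ℕ} (F : Finset (ZMod (2 * n))) :
    {x : ZMod (2 * n) × Fin p | x.1 ∈ F}.ncard = F.card * p := by
  have : {x : ZMod (2 * n) × Fin p | x.1 ∈ F} = ↑(F ×ˢ (Finset.univ : Finset (Fin p))) := by
    ext x; simp
  rw [this, Set.ncard_coe_finset, Finset.card_product, Finset.card_univ, Fintype.card_fin]

lemma block_ncard {p n : ℕ} (hn : 3 ≤ n) (a : ZMod (2 * n)) :
    (block p n a).ncard = 2 * p := by
  have h1 : (1 : ZMod (2 * n)) ≠ 0 := by
    exact_mod_cast natCast_ne_zero_of_lt (n := n) (k := 1) (by omega) (by omega)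
  have h := ncard_index_mem (p := p) ({a, a + 1} : Finset (ZMod (2 * n)))
  rw [Finset.card_pair (by simpa using h1)] at h
  rw [← h]
  congr 1
  ext x; simp [block]

/-- Two blocks with the same parity that meet are the same block. -/
lemma eq_of_mem_block {p n : ℕ} {a b : ZMod (2 * n)} (hab : par n a = par n b)
    {x : ZMod (2 * n) × Fin p} (ha : x ∈ block p n a) (hb : x ∈ block p n b) : a = b := by
  have h01 : (1 : ZMod 2) ≠ 0 := by decide
  rcases ha with ha | ha <;> rcases hb with hb | hb
  · exact ha.symm.trans hb
  · have := congrArg (par n) (ha.symm.trans hb)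
    rw [map_add, map_one, hab] at this
    exact absurd (left_eq_add.mp this) h01
  · have := congrArg (par n) (ha.symm.trans hb)
    rw [map_add, map_one, hab] at this
    exact absurd (add_eq_left.mp this) h01
  · exact add_right_cancel (ha.symm.trans hb)

lemma block_injective {p n : ℕ} (hn : 3 ≤ n) (hp : 1 ≤ p) :
    Function.Injective (block p n) := by
  intro a b h
  have h2 : (2 : ZMod (2 * n)) ≠ 0 := by
    exact_mod_cast natCast_ne_zero_of_lt (n := n) (k := 2) (by omega) (by omega)
  have ha : ((a, ⟨0, hp⟩) : ZMod (2 * n) × Fin p) ∈ block p n b := h ▸ Or.inl rfl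
  have hb : ((b, ⟨0, hp⟩) : ZMod (2 * n) × Fin p) ∈ block p n a := h ▸ Or.inl rfl
  rcases ha with ha | ha
  · exact ha
  · rcases hb with hb | hb
    · exact hb.symm
    · simp only at ha hb
      exact absurd (by linear_combination -ha - hb) h2

/-! ### The partitions into even and odd blocks -/

lemma two_mul_injective {n : ℕ} :
    Function.Injective fun i : Fin n => ((2 * (i : ℕ) : ℕ) : ZMod (2 * n)) := by
  intro i j h
  have h' := (ZMod.natCast_eq_natCast_iff' _ _ _).mp h
  rw [Nat.mod_eq_of_lt (by omega), Nat.mod_eq_of_lt (by omega)] at h'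
  exact Fin.ext (by omega)

lemma par_natCast {n : ℕ} (k : ℕ) : par n (k : ZMod (2 * n)) = (k : ZMod 2) := map_natCast _ k

lemma par_two_mul {n : ℕ} (k : ℕ) : par n ((2 * k : ℕ) : ZMod (2 * n)) = 0 := by
  rw [par_natCast, ZMod.natCast_eq_zero_iff]
  exact dvd_mul_right 2 k

lemma exists_of_par_eq_zero {n : ℕ} (hn : 3 ≤ n) {a : ZMod (2 * n)} (ha : par n a = 0) :
    ∃ i : Fin n, a = ((2 * (i : ℕ) : ℕ) : ZMod (2 * n)) := by
  have : NeZero (2 * n) := ⟨by omega⟩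
  have hv : ((a.val : ℕ) : ZMod (2 * n)) = a := ZMod.natCast_zmod_val a
  have hlt := ZMod.val_lt a
  rw [← hv, par_natCast, ZMod.natCast_eq_zero_iff] at ha
  obtain ⟨k, hk⟩ := ha
  exact ⟨⟨k, by omega⟩, by rw [← hk, hv]⟩

/-- The family of blocks whose first class has parity `c`. -/
def parPart (p n : ℕ) (c : ZMod 2) : Set (Set (ZMod (2 * n) × Fin p)) :=
  {s | ∃ a, par n a = c ∧ s = block p n a}

lemma Cpart_eq_range (p n : ℕ) :
    Cpart p n = Set.range fun i : Fin n => block p n ((2 * (i : ℕ) : ℕ) : ZMod (2 * n)) := by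
  ext s
  simp only [Cpart, block, Set.mem_ofPred_eq, Set.mem_range, Nat.cast_add, Nat.cast_one, eq_comm]

lemma Rpart_eq_range (p n : ℕ) :
    Rpart p n =
      Set.range fun i : Fin n => block p n (((2 * (i : ℕ) : ℕ) : ZMod (2 * n)) - 1) := by
  ext s
  simp only [Rpart, block, Set.mem_ofPred_eq, Set.mem_range, sub_add_cancel, eq_comm]

lemma Cpart_eq {p n : ℕ} (hn : 3 ≤ n) : Cpart p n = parPart p n 0 := by
  rw [Cpart_eq_range]
  ext s
  constructor
  · rintro ⟨i, rfl⟩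
    exact ⟨_, par_two_mul _, rfl⟩
  · rintro ⟨a, ha, rfl⟩
    obtain ⟨i, rfl⟩ := exists_of_par_eq_zero hn ha
    exact ⟨i, rfl⟩

lemma Rpart_eq {p n : ℕ} (hn : 3 ≤ n) : Rpart p n = parPart p n 1 := by
  rw [Rpart_eq_range]
  ext s
  constructor
  · rintro ⟨i, rfl⟩
    refine ⟨_, ?_, rfl⟩
    rw [map_sub, par_two_mul, map_one]
    decide
  · rintro ⟨a, ha, rfl⟩
    have h : par n (a + 1) = 0 := by
      rw [map_add, ha, map_one]; decide
    obtain ⟨i, hi⟩ := exists_of_par_eq_zero hn h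
    exact ⟨i, by simp only [← hi, add_sub_cancel_right]⟩

lemma ncard_Cpart {p n : ℕ} (hn : 3 ≤ n) (hp : 1 ≤ p) : (Cpart p n).ncard = n := by
  rw [Cpart_eq_range, ← Set.image_univ, Set.ncard_image_of_injective, Set.ncard_univ,
    Nat.card_eq_fintype_card, Fintype.card_fin]
  exact (block_injective hn hp).comp two_mul_injective

lemma ncard_Rpart {p n : ℕ} (hn : 3 ≤ n) (hp : 1 ≤ p) : (Rpart p n).ncard = n := by
  rw [Rpart_eq_range, ← Set.image_univ, Set.ncard_image_of_injective, Set.ncard_univ,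
    Nat.card_eq_fintype_card, Fintype.card_fin]
  exact (block_injective hn hp).comp (sub_left_injective.comp two_mul_injective)

lemma parPart_isIndepPartition {p n : ℕ} {c : ZMod 2} (hc : (parPart p n c).ncard = n) :
    IsIndepPartition (Hgraph p n)ᶜ n (parPart p n c) := by
  refine ⟨hc, ?_, ?_, ?_⟩
  · rintro s ⟨a, -, rfl⟩
    exact block_indep a
  · refine Set.eq_univ_of_forall fun x => ?_
    by_cases h : par n x.1 = c
    · exact ⟨_, ⟨x.1, h, rfl⟩, Or.inl rfl⟩
    · refine ⟨_, ⟨x.1 - 1, ?_, rfl⟩, Or.inr (sub_add_cancel _ _).symm⟩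
      rw [map_sub, map_one]
      generalize par n x.1 = d at h
      clear hc
      revert c d
      decide
  · rintro s ⟨a, ha, rfl⟩ t ⟨b, hb, rfl⟩ hne
    refine Set.disjoint_left.mpr fun x hxa hxb => hne ?_
    rw [eq_of_mem_block (ha.trans hb.symm) hxa hxb]

/-! ### Every partition into `n` independent sets is one of the two -/

lemma card_vertices (p n : ℕ) : Nat.card (ZMod (2 * n) × Fin p) = 2 * p * n := by
  rw [Nat.card_prod, Nat.card_zmod, Nat.card_eq_fintype_card, Fintype.card_fin]
  ring

/-- In a partition into `n` independent sets of the complement, every part has at most `2 * p`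
elements, and the parts cover `2 * p * n` vertices; hence every part is a full block. -/
lemma exists_eq_block {p n : ℕ} (hn : 3 ≤ n) {P : Set (Set (ZMod (2 * n) × Fin p))}
    (hP : IsIndepPartition (Hgraph p n)ᶜ n P) : ∀ s ∈ P, ∃ a, s = block p n a := by
  classical
  have : NeZero (2 * n) := ⟨by omega⟩
  obtain ⟨hcard, hind, hcov, hdis⟩ := hP
  have hle : ∀ s ∈ P, s.ncard ≤ 2 * p := fun s hs => by
    obtain ⟨a, ha⟩ := subset_block hn (hind s hs)
    exact (Set.ncard_le_ncard ha (Set.toFinite _)).trans_eq (block_ncard hn a)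
  have hfin : P.Finite := Set.toFinite P
  have hsum : 2 * p * n ≤ ∑ s ∈ hfin.toFinset, s.ncard := by
    have h := Finset.set_ncard_biUnion_le hfin.toFinset id
    have hU : (⋃ s ∈ hfin.toFinset, id s) = (Set.univ : Set (ZMod (2 * n) × Fin p)) := by
      rw [← hcov, Set.sUnion_eq_biUnion]
      simp
    rw [hU, Set.ncard_univ, card_vertices] at h
    exact h
  have hle' : ∀ s ∈ hfin.toFinset, s.ncard ≤ 2 * p := fun s hs =>
    hle s (hfin.mem_toFinset.mp hs)
  have hconst : ∑ _s ∈ hfin.toFinset, 2 * p = 2 * p * n := by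
    rw [Finset.sum_const, ← Set.ncard_eq_toFinset_card P hfin, hcard, smul_eq_mul, mul_comm]
  have heq : ∀ s ∈ hfin.toFinset, s.ncard = 2 * p :=
    (Finset.sum_eq_sum_iff_of_le hle').mp
      (le_antisymm (Finset.sum_le_sum hle') (hconst.trans_le hsum))
  intro s hs
  obtain ⟨a, ha⟩ := subset_block hn (hind s hs)
  refine ⟨a, Set.eq_of_subset_of_ncard_le ha ?_ (Set.toFinite _)⟩
  rw [block_ncard hn, heq s (hfin.mem_toFinset.mpr hs)]

/-- The blocks used by a partition start at every second class: disjointness forbids two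
consecutive starting points and covering forbids two consecutive gaps. -/
lemma partition_cases {p n : ℕ} (hn : 3 ≤ n) (hp : 1 ≤ p)
    {P : Set (Set (ZMod (2 * n) × Fin p))} (hP : IsIndepPartition (Hgraph p n)ᶜ n P) :
    P = Cpart p n ∨ P = Rpart p n := by
  have : NeZero (2 * n) := ⟨by omega⟩
  have hblock := exists_eq_block hn hP
  obtain ⟨-, -, hcov, hdis⟩ := hP
  have h1 : (1 : ZMod (2 * n)) ≠ 0 := by
    exact_mod_cast natCast_ne_zero_of_lt (n := n) (k := 1) (by omega) (by omega)
  have hstep : ∀ a, block p n (a + 1) ∈ P ↔ block p n a ∉ P := by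
    intro a
    constructor
    · intro h h'
      have hne : block p n a ≠ block p n (a + 1) := fun e =>
        h1 (left_eq_add.mp (block_injective hn hp e))
      exact Set.disjoint_left.mp (hdis h' h hne)
        (show ((a + 1, ⟨0, hp⟩) : ZMod (2 * n) × Fin p) ∈ _ from Or.inr rfl) (Or.inl rfl)
    · intro h
      obtain ⟨s, hs, hmem⟩ : ((a + 1, ⟨0, hp⟩) : ZMod (2 * n) × Fin p) ∈ ⋃₀ P :=
        hcov ▸ Set.mem_univ _
      obtain ⟨b, rfl⟩ := hblock s hs
      rcases hmem with e | e
      · exact (show a + 1 = b from e) ▸ hs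
      · exact absurd ((add_right_cancel e : a = b) ▸ hs) h
  have hnat : ∀ k : ℕ, block p n (k : ZMod (2 * n)) ∈ P ↔
      (block p n 0 ∈ P ↔ (k : ZMod 2) = 0) := by
    intro k
    induction k with
    | zero => simp
    | succ k ih =>
      rw [Nat.cast_succ, hstep, ih, Nat.cast_succ]
      have h2 : ((k : ZMod 2) + 1 = 0) ↔ ¬ (k : ZMod 2) = 0 := by
        generalize (k : ZMod 2) = d
        revert d; decide
      tauto
  have hall : ∀ a, block p n a ∈ P ↔ (block p n 0 ∈ P ↔ par n a = 0) := by
    intro a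
    have := hnat a.val
    rwa [← par_natCast (n := n), ZMod.natCast_zmod_val] at this
  by_cases h0 : block p n 0 ∈ P
  · left
    rw [Cpart_eq hn]
    ext s
    constructor
    · intro hs
      obtain ⟨a, rfl⟩ := hblock s hs
      exact ⟨a, ((hall a).mp hs).mp h0, rfl⟩
    · rintro ⟨a, ha, rfl⟩
      exact (hall a).mpr (by tauto)
  · right
    rw [Rpart_eq hn]
    ext s
    constructor
    · intro hs
      obtain ⟨a, rfl⟩ := hblock s hs
      refine ⟨a, (zmod_two_cases _).resolve_left fun h => h0 (((hall a).mp hs).mpr h), rfl⟩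
    · rintro ⟨a, ha, rfl⟩
      refine (hall a).mpr ?_
      have : par n a ≠ 0 := by rw [ha]; decide
      tauto

/-! ### Degrees and chromatic number of the complement -/

lemma deg_compl {p n : ℕ} (hn : 3 ≤ n) (x : ZMod (2 * n) × Fin p) :
    deg (Hgraph p n)ᶜ x = 2 * n * p - 3 * p := by
  have : NeZero (2 * n) := ⟨by omega⟩
  have h1 : (1 : ZMod (2 * n)) ≠ 0 := by
    exact_mod_cast natCast_ne_zero_of_lt (n := n) (k := 1) (by omega) (by omega)
  have h2 : (2 : ZMod (2 * n)) ≠ 0 := by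
    exact_mod_cast natCast_ne_zero_of_lt (n := n) (k := 2) (by omega) (by omega)
  have hF : ({x.1, x.1 + 1, x.1 - 1} : Finset (ZMod (2 * n))).card = 3 := by
    refine Finset.card_eq_three.mpr ⟨_, _, _, ?_, ?_, ?_, rfl⟩
    · exact fun h => h1 (left_eq_add.mp h)
    · exact fun h => h1 (by linear_combination h)
    · exact fun h => h2 (by linear_combination h)
  have hset : (Hgraph p n)ᶜ.neighborSet x =
      {y | y.1 ∈ ({x.1, x.1 + 1, x.1 - 1} : Finset (ZMod (2 * n)))}ᶜ := by
    ext y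
    rw [SimpleGraph.mem_neighborSet, compl_adj_iff, Set.mem_compl_iff, not_iff_not]
    simp only [Set.mem_ofPred_eq, Finset.mem_insert, Finset.mem_singleton, eq_sub_iff_add_eq]
    rw [eq_comm (a := x.1) (b := y.1), eq_comm (a := x.1 + 1) (b := y.1)]
  rw [deg, hset, Set.ncard_compl, ncard_index_mem, hF, card_vertices]
  congr 1
  ring

lemma chromaticNumber_compl {p n : ℕ} (hn : 3 ≤ n) (hp : 1 ≤ p) :
    (Hgraph p n)ᶜ.chromaticNumber = n := by
  have : NeZero (2 * n) := ⟨by omega⟩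
  refine le_antisymm ?_ ?_
  ·
    -- Color the classes `V_{2i}` and `V_{2i+1}` with `i`.
    refine SimpleGraph.Colorable.chromaticNumber_le ⟨SimpleGraph.Coloring.mk
      (fun x => (⟨x.1.val / 2, by have := ZMod.val_lt x.1; omega⟩ : Fin n)) ?_⟩
    intro x y hxy heq
    rw [compl_adj_iff] at hxy
    apply hxy
    have hdiv : x.1.val / 2 = y.1.val / 2 := congrArg Fin.val heq
    rw [← ZMod.natCast_zmod_val x.1, ← ZMod.natCast_zmod_val y.1]
    rcases (by omega : x.1.val = y.1.val ∨ x.1.val + 1 = y.1.val ∨ y.1.val + 1 = x.1.val)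
      with h | h | h
    · left; rw [h]
    · right; left; rw [← h]; push_cast; rfl
    · right; right; rw [← h]; push_cast; rfl
  ·
    -- One vertex from each even-indexed class gives a clique of size `n`.
    let f : Fin n → ZMod (2 * n) × Fin p := fun i => (((2 * (i : ℕ) : ℕ) : ZMod (2 * n)), ⟨0, hp⟩)
    have hf : Function.Injective f := fun i j h => two_mul_injective (congrArg Prod.fst h)
    have hcl : (Hgraph p n)ᶜ.IsClique ((Finset.univ.map ⟨f, hf⟩ : Finset _) : Set _) := by
      intro x hx y hy hne
      simp only [Finset.coe_map, Function.Embedding.coeFn_mk, Finset.coe_univ, Set.image_univ,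
        Set.mem_range] at hx hy
      obtain ⟨i, rfl⟩ := hx
      obtain ⟨j, rfl⟩ := hy
      rw [compl_adj_iff]
      have hodd : ∀ k l : ℕ,
          ((2 * k : ℕ) : ZMod (2 * n)) + 1 ≠ ((2 * l : ℕ) : ZMod (2 * n)) := fun k l h => by
        have := congrArg (par n) h
        rw [map_add, par_two_mul, par_two_mul, map_one] at this
        exact absurd this (by decide)
      rintro (h | h | h)
      · exact hne (congrArg f (two_mul_injective h))
      · exact hodd _ _ h
      · exact hodd _ _ h
    simpa using hcl.card_le_chromaticNumber

/-! ### Common unions of even and odd blocks -/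

/-- If a nonempty union of parts of `parPart p n 0` were also a union of parts of
`parPart p n 1`, the set of classes it meets would be closed under `a ↦ a + 1`, so it would
meet every class and use every part. -/
lemma eq_of_sUnion_eq {p n : ℕ} (hn : 3 ≤ n) (hp : 1 ≤ p)
    {S T : Set (Set (ZMod (2 * n) × Fin p))} (hS : S ⊆ parPart p n 0)
    (hT : T ⊆ parPart p n 1) (hne : S.Nonempty) (h : ⋃₀ S = ⋃₀ T) : S = parPart p n 0 := by
  have : NeZero (2 * n) := ⟨by omega⟩
  have key : ∀ (c : ZMod 2) (Q : Set (Set (ZMod (2 * n) × Fin p))), Q ⊆ parPart p n c →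
      ∀ a, par n a = c → ((a, ⟨0, hp⟩) : ZMod (2 * n) × Fin p) ∈ ⋃₀ Q → block p n a ∈ Q := by
    rintro c Q hQ a ha ⟨s, hs, hmem⟩
    obtain ⟨b, hb, rfl⟩ := hQ hs
    have hba : b = a := eq_of_mem_block (hb.trans ha.symm) hmem (Or.inl rfl)
    exact hba ▸ hs
  have hstep : ∀ a, ((a, ⟨0, hp⟩) : ZMod (2 * n) × Fin p) ∈ ⋃₀ S →
      ((a + 1, ⟨0, hp⟩) : ZMod (2 * n) × Fin p) ∈ ⋃₀ S := by
    intro a ha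
    rcases zmod_two_cases (par n a) with hc | hc
    · exact ⟨_, key 0 S hS a hc ha, Or.inr rfl⟩
    · rw [h] at ha ⊢
      exact ⟨_, key 1 T hT a hc ha, Or.inr rfl⟩
  obtain ⟨s, hs⟩ := hne
  obtain ⟨b, -, rfl⟩ := hS hs
  have hnat : ∀ k : ℕ, ((b + k, ⟨0, hp⟩) : ZMod (2 * n) × Fin p) ∈ ⋃₀ S := by
    intro k
    induction k with
    | zero => exact ⟨_, hs, Or.inl (by simp)⟩
    | succ k ih => rw [Nat.cast_succ, ← add_assoc]; exact hstep _ ih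
  refine Set.Subset.antisymm hS ?_
  rintro _ ⟨a, ha, rfl⟩
  have hmem := hnat (a - b).val
  rw [ZMod.natCast_zmod_val, add_sub_cancel] at hmem
  exact key 0 S hS a ha hmem



/-- For `n ≥ 3`, `p ≥ 1`, the complement of `H(p,n)` is `(2np - 3p)`-regular on
`2pn` vertices, has chromatic number `n`, has exactly two proper vertex `n`-colorings (the
partitions `{C_i}` and `{R_i}`), and for every `1 ≤ s ≤ n-1` the union of any `s` color
classes of the first coloring differs from the union of any `s` color classes of the second
(so the induced subgraphs are distinct, and transforming one coloring into the other requires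
changing all `n` color classes). -/
theorem complement_Hgraph_two_colorings (p n : ℕ) (hn : 3 ≤ n) (hp : 1 ≤ p) :
    (∀ x, deg (Hgraph p n)ᶜ x = 2 * n * p - 3 * p) ∧
    Nat.card (ZMod (2 * n) × Fin p) = 2 * p * n ∧
    (Hgraph p n)ᶜ.chromaticNumber = n ∧
    IsIndepPartition (Hgraph p n)ᶜ n (Cpart p n) ∧
    IsIndepPartition (Hgraph p n)ᶜ n (Rpart p n) ∧
    (∀ P : Set (Set (ZMod (2 * n) × Fin p)),
      IsIndepPartition (Hgraph p n)ᶜ n P → P = Cpart p n ∨ P = Rpart p n) ∧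
    ∀ s : ℕ, 1 ≤ s → s ≤ n - 1 →
      ∀ S ⊆ Cpart p n, ∀ T ⊆ Rpart p n, S.ncard = s → T.ncard = s →
        ⋃₀ S ≠ ⋃₀ T := by
  have hC := ncard_Cpart (p := p) hn hp
  have hR := ncard_Rpart (p := p) hn hp
  refine ⟨deg_compl hn, card_vertices p n, chromaticNumber_compl hn hp, ?_, ?_,
    fun P hP => partition_cases hn hp hP, ?_⟩
  · rw [Cpart_eq hn] at hC ⊢
    exact parPart_isIndepPartition hC
  · rw [Rpart_eq hn] at hR ⊢
    exact parPart_isIndepPartition hR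
  · intro s hs1 hsn S hS T hT hSs _ h
    have hne : S.Nonempty := Set.nonempty_of_ncard_ne_zero (by omega)
    rw [Cpart_eq hn] at hS hC
    rw [Rpart_eq hn] at hT
    rw [eq_of_sUnion_eq hn hp hS hT hne h] at hSs
    omega

end EdgeTrans
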